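/- For every integer n ≥ 1, the sum over all compositions α = (a₁,…,a_k) of n of (−1)^k · n!/(a₁!·a₂!·⋯·a_k!) equals (−1)^n. -/

import Mathlib

/-!
For a power series `F` without constant term, the generating function of the sums over all
compositions `(a₁, …, a_k)` of the products `F_{a₁} ⋯ F_{a_k}` is the geometric series
`1 / (1 - F)`. Taking `F = 1 - exp X`, these products are `(-1)^k / (a₁! ⋯ a_k!)`, and
`1 / (1 - F) = exp (-X)` has coefficients `(-1)^n / n!`.
-/

open Finset PowerSeries
open scoped Nat

theorem sum_composition_succ {M : Type*} [AddCommMonoid M] (g : List ℕ → M) (n : ℕ) :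
    ∑ c : Composition (n + 1), g c.blocks =
      ∑ p ∈ antidiagonal n, ∑ c : Composition p.2, g ((p.1 + 1) :: c.blocks) := by
  have size_eq {p : ℕ × ℕ} (hp : p ∈ antidiagonal n) : p.1 + 1 + p.2 = n + 1 := by
    rw [add_right_comm, mem_antidiagonal.1 hp]
  rw [sum_sigma']
  symm
  refine sum_bij (fun x hx ↦ ((Composition.single (x.1.1 + 1) x.1.1.succ_pos).append x.2).cast
    (size_eq (mem_sigma.1 hx).1)) (fun _ _ ↦ mem_univ _) ?injective ?surjective (fun _ _ ↦ rfl)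
  case injective =>
    rintro ⟨⟨i, j⟩, c⟩ hc ⟨⟨i', j'⟩, c'⟩ hc' h
    obtain ⟨hi, hblocks⟩ : i + 1 = i' + 1 ∧ c.blocks = c'.blocks :=
      List.cons.inj (congrArg Composition.blocks h)
    obtain rfl : i = i' := Nat.succ.inj hi
    obtain rfl : j = j' := c.blocks_sum.symm.trans (hblocks ▸ c'.blocks_sum)
    rw [Composition.ext hblocks]
  case surjective =>
    rintro ⟨_ | ⟨_ | i, l⟩, hpos, hsum⟩ -
    · simp at hsum
    · exact absurd (hpos List.mem_cons_self) (lt_irrefl 0)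
    · have hi : i + l.sum = n := by
        rw [List.sum_cons] at hsum
        omega
      exact ⟨⟨(i, l.sum), ⟨l, fun h ↦ hpos (List.mem_cons_of_mem _ h), rfl⟩⟩,
        mem_sigma.2 ⟨mem_antidiagonal.2 hi, mem_univ _⟩, rfl⟩

/-- The generating function of compositions in which a part `a` has weight `coeff a F` and a
composition has the product of the weights of its parts. Parts being positive, it depends only on
the coefficients of `F` of positive degree. -/
noncomputable def compositionSeries {R : Type*} [Semiring R] (F : R⟦X⟧) : R⟦X⟧ :=
  mk fun n ↦ ∑ c : Composition n, (c.blocks.map fun a ↦ coeff a F).prod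

theorem compositionSeries_eq_one_add_mul {R : Type*} [Semiring R] {F : R⟦X⟧}
    (hF : constantCoeff F = 0) : compositionSeries F = 1 + F * compositionSeries F := by
  ext n
  cases n with
  | zero =>
    have blocks_eq (c : Composition 0) : c.blocks = [] := c.blocks_eq_nil.2 rfl
    simp [compositionSeries, blocks_eq, composition_card, hF]
  | succ n =>
    rw [map_add, coeff_mul, Nat.sum_antidiagonal_succ, coeff_zero_eq_constantCoeff_apply, hF]
    simp [compositionSeries, coeff_one, mul_sum,
      sum_composition_succ fun l ↦ (l.map fun a ↦ coeff a F).prod]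

theorem one_sub_mul_compositionSeries {R : Type*} [Ring R] {F : R⟦X⟧}
    (hF : constantCoeff F = 0) : (1 - F) * compositionSeries F = 1 := by
  rw [sub_mul, one_mul, sub_eq_iff_eq_add]
  exact compositionSeries_eq_one_add_mul hF

theorem compositionSeries_one_sub_exp (A : Type*) [CommRing A] [Algebra ℚ A] :
    compositionSeries (1 - exp A) = evalNegHom (exp A) := by
  have exp_mul_eq_one := one_sub_mul_compositionSeries (F := 1 - exp A) (by simp)
  rw [sub_sub_cancel] at exp_mul_eq_one
  exact (isUnit_exp A).mul_left_cancel (exp_mul_eq_one.trans exp_mul_exp_neg_eq_one.symm)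

theorem prod_map_coeff_one_sub_exp {l : List ℕ} (hl : ∀ a ∈ l, a ≠ 0) :
    (l.map fun a ↦ coeff a (1 - exp ℚ)).prod =
      (-1 : ℚ) ^ l.length / ((l.map Nat.factorial).prod : ℕ) := by
  induction l with
  | nil => simp
  | cons a l ih =>
    obtain ⟨ha, hl⟩ := List.forall_mem_cons.1 hl
    have coeff_eq : coeff a (1 - exp ℚ) = -1 / (a ! : ℚ) := by
      simp [coeff_one, coeff_exp, ha, neg_div]
    rw [List.map_cons, List.prod_cons, ih hl, coeff_eq, div_mul_div_comm, List.length_cons,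
      pow_succ', List.map_cons, List.prod_cons, Nat.cast_mul]

theorem prod_map_factorial_dvd_factorial_sum (l : List ℕ) :
    (l.map Nat.factorial).prod ∣ l.sum ! := by
  induction l with
  | nil => simp
  | cons a l ih =>
    rw [List.map_cons, List.prod_cons, List.sum_cons]
    exact (mul_dvd_mul_left _ ih).trans (Nat.factorial_mul_factorial_dvd_factorial_add a l.sum)

theorem neg_one_pow_length_mul_multinomial {n : ℕ} (c : Composition n) :
    (-1 : ℚ) ^ c.length * ((n ! / (c.blocks.map Nat.factorial).prod : ℕ) : ℚ) =
      n ! * (c.blocks.map fun a ↦ coeff a (1 - exp ℚ)).prod := by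
  have hdvd : (c.blocks.map Nat.factorial).prod ∣ n ! := by
    simpa only [c.blocks_sum] using prod_map_factorial_dvd_factorial_sum c.blocks
  rw [prod_map_coeff_one_sub_exp fun a ha ↦ (c.blocks_pos ha).ne', c.blocks_length,
    Nat.cast_div_charZero hdvd, mul_div_left_comm]

/-- for `n ≥ 1`,
`Σ_{α = (a₁,…,a_k) ⊨ n} (−1)^k · n!/(a₁!⋯a_k!) = (−1)^n`. -/
theorem statement_9 (n : ℕ) (hn : 1 ≤ n) :
    ∑ c : Composition n,
      (-1 : ℤ) ^ c.length *
        ((n.factorial / (c.blocks.map Nat.factorial).prod : ℕ) : ℤ) =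
      (-1 : ℤ) ^ n := by
  apply Int.cast_injective (α := ℚ)
  simp only [Int.cast_sum, Int.cast_mul, Int.cast_pow, Int.cast_neg, Int.cast_one,
    Int.cast_natCast]
  calc
    _ = ∑ c : Composition n, (n ! : ℚ) * (c.blocks.map fun a ↦ coeff a (1 - exp ℚ)).prod :=
      sum_congr rfl fun c _ ↦ neg_one_pow_length_mul_multinomial c
    _ = n ! * coeff n (compositionSeries (1 - exp ℚ)) := by
      rw [compositionSeries, coeff_mk, mul_sum]
    _ = n ! * ((-1) ^ n * (1 / n !)) := by
      rw [compositionSeries_one_sub_exp, evalNegHom, coeff_rescale, coeff_exp, eq_ratCast,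
        Rat.cast_id]
    _ = (-1) ^ n := by field_simp
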